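/- With A_g as above (g ≥ 2, n ≥ 2), an additive basis of A_g is also given by the images of the monomials v_1⋯v_n such that (i) each v_i ∈ {1, x_i(p), y_i(p), ω_i : 1 ≤ p ≤ g}, and (ii) at most one of v_1,…,v_n belongs to {x_i(p), y_i(p), ω_i : 2 ≤ p ≤ g}. -/

import Mathlib

/-- Generators of the rational cohomology of the `n`-fold power of a genus-`g` surface:
`a i p`, `b i p` in degree 1 and `w i` (the class `ω_i`) in degree 2.  The indices are
`0`-based: `a i p` stands for the class `a_{i+1}(p+1)` of the paper. -/
inductive SurfGen (n g : ℕ) : Type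
  | a (i : Fin n) (p : Fin g)
  | b (i : Fin n) (p : Fin g)
  | w (i : Fin n)

/-- The cohomological degree of a generator. -/
def SurfGen.deg {n g : ℕ} : SurfGen n g → ℕ
  | .a _ _ => 1
  | .b _ _ => 1
  | .w _ => 2

open FreeAlgebra in
/-- The defining relations of `H^*(Σ_g^{×n}; ℚ)`: within each factor,
`a_i(p)a_i(q) = b_i(p)b_i(q) = 0`, `a_i(p)b_i(q) = δ_{pq} ω_i`, together with
graded (Koszul-signed) commutativity of the generators. -/
inductive SurfRel (n g : ℕ) :
    FreeAlgebra ℚ (SurfGen n g) → FreeAlgebra ℚ (SurfGen n g) → Prop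
  | aa (i : Fin n) (p q : Fin g) :
      SurfRel n g (ι ℚ (SurfGen.a i p) * ι ℚ (SurfGen.a i q)) 0
  | bb (i : Fin n) (p q : Fin g) :
      SurfRel n g (ι ℚ (SurfGen.b i p) * ι ℚ (SurfGen.b i q)) 0
  | ab_eq (i : Fin n) (p : Fin g) :
      SurfRel n g (ι ℚ (SurfGen.a i p) * ι ℚ (SurfGen.b i p)) (ι ℚ (SurfGen.w i))
  | ab_ne (i : Fin n) (p q : Fin g) : p ≠ q →
      SurfRel n g (ι ℚ (SurfGen.a i p) * ι ℚ (SurfGen.b i q)) 0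
  | koszul (u v : SurfGen n g) :
      SurfRel n g (ι ℚ u * ι ℚ v)
        (((-1 : ℚ) ^ (u.deg * v.deg)) • (ι ℚ v * ι ℚ u))

/-- `H^*(Σ_g^{×n}; ℚ)`, presented by generators and relations. -/
def SurfCoh (n g : ℕ) : Type := RingQuot (SurfRel n g)

noncomputable instance (n g : ℕ) : Ring (SurfCoh n g) :=
  inferInstanceAs (Ring (RingQuot (SurfRel n g)))

noncomputable instance (n g : ℕ) : Algebra ℚ (SurfCoh n g) :=
  inferInstanceAs (Algebra ℚ (RingQuot (SurfRel n g)))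

/-- The class `a_{i+1}(p+1)`. -/
noncomputable def gA {n g : ℕ} (i : Fin n) (p : Fin g) : SurfCoh n g :=
  RingQuot.mkAlgHom ℚ (SurfRel n g) (FreeAlgebra.ι ℚ (SurfGen.a i p))

/-- The class `b_{i+1}(p+1)`. -/
noncomputable def gB {n g : ℕ} (i : Fin n) (p : Fin g) : SurfCoh n g :=
  RingQuot.mkAlgHom ℚ (SurfRel n g) (FreeAlgebra.ι ℚ (SurfGen.b i p))

/-- The class `ω_{i+1}`. -/
noncomputable def gW {n g : ℕ} (i : Fin n) : SurfCoh n g :=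
  RingQuot.mkAlgHom ℚ (SurfRel n g) (FreeAlgebra.ι ℚ (SurfGen.w i))

/-- The class `x_{i+1}(p+1)`: equal to `a_{i+1}(p+1)` unless `p+1 = 1` and `i+1 ≥ 2`, in which
case it is `a_{i+1}(1) - a_1(1)`. -/
noncomputable def gX {n g : ℕ} [NeZero n] [NeZero g] (i : Fin n) (p : Fin g) : SurfCoh n g :=
  if p = 0 ∧ i ≠ 0 then gA i p - gA 0 p else gA i p

/-- The class `y_{i+1}(p+1)`: equal to `b_{i+1}(p+1)` unless `p+1 = 1` and `i+1 ≥ 2`, in which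
case it is `b_{i+1}(1) - b_1(1)`. -/
noncomputable def gY {n g : ℕ} [NeZero n] [NeZero g] (i : Fin n) (p : Fin g) : SurfCoh n g :=
  if p = 0 ∧ i ≠ 0 then gB i p - gB 0 p else gB i p

/-- The relations defining the quotient algebra `A_g`: all products
`x_i(p)x_j(q)`, `x_i(p)y_j(q)`, `y_i(p)y_j(q)` with `p, q ≥ 2` and `i ≠ j` are set to zero. -/
inductive ARel (n g : ℕ) [NeZero n] [NeZero g] : SurfCoh n g → SurfCoh n g → Prop
  | xx (i j : Fin n) (p q : Fin g) : i ≠ j → p ≠ 0 → q ≠ 0 → ARel n g (gX i p * gX j q) 0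
  | xy (i j : Fin n) (p q : Fin g) : i ≠ j → p ≠ 0 → q ≠ 0 → ARel n g (gX i p * gY j q) 0
  | yy (i j : Fin n) (p q : Fin g) : i ≠ j → p ≠ 0 → q ≠ 0 → ARel n g (gY i p * gY j q) 0

/-- The algebra `A_g`: the quotient of `H^*(Σ_g^{×n}; ℚ)` by the ideal generated by the
products `x_i(p)x_j(q)`, `x_i(p)y_j(q)`, `y_i(p)y_j(q)` with `p, q ≥ 2`, `i ≠ j`. -/
def SurfA (n g : ℕ) [NeZero n] [NeZero g] : Type := RingQuot (ARel n g)

noncomputable instance (n g : ℕ) [NeZero n] [NeZero g] : Ring (SurfA n g) :=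
  inferInstanceAs (Ring (RingQuot (ARel n g)))

noncomputable instance (n g : ℕ) [NeZero n] [NeZero g] : Algebra ℚ (SurfA n g) :=
  inferInstanceAs (Algebra ℚ (RingQuot (ARel n g)))

/-- The quotient map `H^*(Σ_g^{×n}; ℚ) → A_g`. -/
noncomputable def toA (n g : ℕ) [NeZero n] [NeZero g] : SurfCoh n g →ₐ[ℚ] SurfA n g :=
  RingQuot.mkAlgHom ℚ (ARel n g)

/-- The image of `x_{i+1} = x_{i+1}(1)` in `A_g`. -/
noncomputable def xA {n g : ℕ} [NeZero n] [NeZero g] (i : Fin n) : SurfA n g :=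
  toA n g (gX i 0)

/-- The image of `y_{i+1} = y_{i+1}(1)` in `A_g`. -/
noncomputable def yA {n g : ℕ} [NeZero n] [NeZero g] (i : Fin n) : SurfA n g :=
  toA n g (gY i 0)

/-- The image of `ω_{i+1}` in `A_g`. -/
noncomputable def wA {n g : ℕ} [NeZero n] [NeZero g] (i : Fin n) : SurfA n g :=
  toA n g (gW i)

/-- The possible letters occurring in the `i`-th slot of a basis monomial:
`1`, `a_i(p)` (resp. `x_i(p)`), `b_i(p)` (resp. `y_i(p)`), or `ω_i`. -/
inductive Letter (g : ℕ) : Type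
  | one : Letter g
  | la (p : Fin g) : Letter g
  | lb (p : Fin g) : Letter g
  | lw : Letter g

/-- A letter is *exceptional* if it lies in `{a_i(p), b_i(p), ω_i : 2 ≤ p ≤ g}`
(resp. `{x_i(p), y_i(p), ω_i : 2 ≤ p ≤ g}`). -/
def Letter.isExc {g : ℕ} [NeZero g] : Letter g → Prop
  | .one => False
  | .la p => p ≠ 0
  | .lb p => p ≠ 0
  | .lw => True

/-- Evaluation of a letter in the `i`-th slot using the generators `a, b, ω`. -/
noncomputable def Letter.evalAB {n g : ℕ} (i : Fin n) : Letter g → SurfCoh n g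
  | .one => 1
  | .la p => gA i p
  | .lb p => gB i p
  | .lw => gW i

/-- Evaluation of a letter in the `i`-th slot using the classes `x, y, ω`. -/
noncomputable def Letter.evalXY {n g : ℕ} [NeZero n] [NeZero g] (i : Fin n) :
    Letter g → SurfCoh n g
  | .one => 1
  | .la p => gX i p
  | .lb p => gY i p
  | .lw => gW i

/-- The monomial `u_1 ⋯ u_n` in `H^*(Σ_g^{×n}; ℚ)` associated to a choice of letters, using the
generators `a, b, ω`. -/
noncomputable def monAB {n g : ℕ} (v : Fin n → Letter g) : SurfCoh n g :=
  (List.ofFn fun i : Fin n => (v i).evalAB i).prod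

/-- The monomial `v_1 ⋯ v_n` in `H^*(Σ_g^{×n}; ℚ)` associated to a choice of letters, using the
classes `x, y, ω`. -/
noncomputable def monXY {n g : ℕ} [NeZero n] [NeZero g] (v : Fin n → Letter g) : SurfCoh n g :=
  (List.ofFn fun i : Fin n => (v i).evalXY i).prod

/-- The proposed basis `β'₂` of `A_g`, indexed by monomials `v_1 ⋯ v_n` with each
`v_i ∈ {1, x_i(p), y_i(p), ω_i}` such that at most one `v_i` lies in
`{x_i(p), y_i(p), ω_i : 2 ≤ p ≤ g}`, mapped to their images in `A_g`. -/
noncomputable def basisFunXY (n g : ℕ) [NeZero n] [NeZero g]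
    (v : {v : Fin n → Letter g // {i : Fin n | (v i).isExc}.Subsingleton}) : SurfA n g :=
  toA n g (monXY v.1)

/-! ### Spanning -/

namespace SurfProof

variable {n g : ℕ}

/-- The quotient map from the free algebra. -/
noncomputable def mkS (n g : ℕ) : FreeAlgebra ℚ (SurfGen n g) →ₐ[ℚ] SurfCoh n g :=
  RingQuot.mkAlgHom ℚ (SurfRel n g)

/-- The image of a generator. -/
noncomputable def gen (u : SurfGen n g) : SurfCoh n g := mkS n g (FreeAlgebra.ι ℚ u)

theorem mkS_rel {x y : FreeAlgebra ℚ (SurfGen n g)} (h : SurfRel n g x y) :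
    mkS n g x = mkS n g y := RingQuot.mkAlgHom_rel ℚ h

theorem mkS_surj : Function.Surjective (mkS n g) := RingQuot.mkAlgHom_surjective ℚ _

theorem gA_eq (i : Fin n) (p : Fin g) : gA i p = gen (SurfGen.a i p) := rfl
theorem gB_eq (i : Fin n) (p : Fin g) : gB i p = gen (SurfGen.b i p) := rfl
theorem gW_eq (i : Fin n) : (gW i : SurfCoh n g) = gen (SurfGen.w i) := rfl

theorem gen_koszul (u v : SurfGen n g) :
    gen u * gen v = ((-1 : ℚ) ^ (u.deg * v.deg)) • (gen v * gen u) := by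
  have := mkS_rel (SurfRel.koszul u v)
  simpa [gen] using this

theorem gA_gA (i : Fin n) (p q : Fin g) : gA i p * gA i q = 0 := by
  have := mkS_rel (SurfRel.aa i p q)
  simpa [gen, gA_eq] using this

theorem gB_gB (i : Fin n) (p q : Fin g) : gB i p * gB i q = 0 := by
  have := mkS_rel (SurfRel.bb i p q)
  simpa [gen, gB_eq] using this

theorem gA_gB_same (i : Fin n) (p : Fin g) : gA i p * gB i p = gW i := by
  have := mkS_rel (SurfRel.ab_eq i p)
  simpa [gen, gA_eq, gB_eq, gW_eq] using this

theorem gA_gB_ne (i : Fin n) {p q : Fin g} (h : p ≠ q) : gA i p * gB i q = 0 := by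
  have := mkS_rel (SurfRel.ab_ne i p q h)
  simpa [gen, gA_eq, gB_eq] using this

theorem gB_gA (i : Fin n) (p q : Fin g) : gB i p * gA i q = - (gA i q * gB i p) := by
  have := gen_koszul (SurfGen.b i p) (SurfGen.a i q)
  simpa [SurfGen.deg, gA_eq, gB_eq] using this

theorem gW_comm (i : Fin n) (u : SurfGen n g) : gW i * gen u = gen u * gW i := by
  have := gen_koszul (SurfGen.w i) u
  simpa [SurfGen.deg, gW_eq, pow_mul] using this

theorem gA_gW [NeZero g] (i : Fin n) (p : Fin g) : gA i p * gW i = 0 := by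
  rw [← gA_gB_same i 0, ← mul_assoc, gA_gA, zero_mul]

theorem gW_gB [NeZero g] (i : Fin n) (p : Fin g) : gW i * gB i p = 0 := by
  rw [← gA_gB_same i 0, mul_assoc, gB_gB, mul_zero]

theorem gW_gA [NeZero g] (i : Fin n) (p : Fin g) : gW i * gA i p = 0 := by
  rw [gA_eq, gW_comm, ← gA_eq, gA_gW]

theorem gB_gW [NeZero g] (i : Fin n) (p : Fin g) : gB i p * gW i = 0 := by
  rw [gB_eq, ← gW_comm, ← gB_eq, gW_gB]

theorem gW_gW [NeZero g] (i : Fin n) : (gW i * gW i : SurfCoh n g) = 0 := by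
  have h : (gW i * gW i : SurfCoh n g) = gA i 0 * (gB i 0 * gW i) := by
    rw [← mul_assoc, gA_gB_same]
  rw [h, gB_gW, mul_zero]

theorem adjoin_gen : Algebra.adjoin ℚ (Set.range (gen : SurfGen n g → SurfCoh n g)) = ⊤ := by
  have h : Set.range (gen : SurfGen n g → SurfCoh n g)
      = mkS n g '' Set.range (FreeAlgebra.ι ℚ) := by
    rw [← Set.range_comp]; rfl
  rw [h, Algebra.adjoin_image, FreeAlgebra.adjoin_range_ι, Algebra.map_top]
  exact (AlgHom.range_eq_top _).2 mkS_surj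

/-- A generator can be moved to the right through any element. -/
theorem gen_move (u : SurfGen n g) (z : SurfCoh n g) : ∃ z', gen u * z = z' * gen u := by
  have hz : z ∈ Algebra.adjoin ℚ (Set.range (gen : SurfGen n g → SurfCoh n g)) := by
    rw [adjoin_gen]; trivial
  induction hz using Algebra.adjoin_induction with
  | mem x hx =>
    obtain ⟨v, rfl⟩ := hx
    exact ⟨((-1 : ℚ) ^ (u.deg * v.deg)) • gen v, by rw [gen_koszul, smul_mul_assoc]⟩
  | algebraMap r => exact ⟨algebraMap ℚ _ r, (Algebra.commutes r (gen u)).symm⟩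
  | add x y _ _ hx hy =>
    obtain ⟨x', hx⟩ := hx
    obtain ⟨y', hy⟩ := hy
    exact ⟨x' + y', by rw [mul_add, hx, hy, add_mul]⟩
  | mul x y _ _ hx hy =>
    obtain ⟨x', hx⟩ := hx
    obtain ⟨y', hy⟩ := hy
    exact ⟨x' * y', by rw [← mul_assoc, hx, mul_assoc, hy, mul_assoc]⟩

/-- Span of the `a, b, ω` letters of slot `i`. -/
noncomputable def MM (g : ℕ) (i : Fin n) : Submodule ℚ (SurfCoh n g) :=
  Submodule.span ℚ (Set.range fun l : Letter g => l.evalAB i)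

/-- Span of the `x, y, ω` letters of slot `i`. -/
noncomputable def LL (g : ℕ) [NeZero n] [NeZero g] (i : Fin n) : Submodule ℚ (SurfCoh n g) :=
  Submodule.span ℚ (Set.range fun l : Letter g => l.evalXY i)

theorem mem_MM (i : Fin n) (l : Letter g) : l.evalAB i ∈ MM g i :=
  Submodule.subset_span ⟨l, rfl⟩

theorem mem_LL [NeZero n] [NeZero g] (i : Fin n) (l : Letter g) : l.evalXY i ∈ LL g i :=
  Submodule.subset_span ⟨l, rfl⟩

theorem one_le_MM (i : Fin n) : 1 ≤ MM g i := Submodule.one_le.2 (mem_MM i .one)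

theorem one_le_LL [NeZero n] [NeZero g] (i : Fin n) : 1 ≤ LL g i :=
  Submodule.one_le.2 (mem_LL i .one)

theorem MM_mul [NeZero g] (i : Fin n) : MM g i * MM g i ≤ MM g i := by
  conv_lhs => rw [MM, Submodule.span_mul_span]
  rw [Submodule.span_le]
  rintro _ ⟨_, ⟨l, rfl⟩, _, ⟨m, rfl⟩, rfl⟩
  have hw : (gW i : SurfCoh n g) ∈ MM g i := mem_MM i .lw
  have h0 : (0 : SurfCoh n g) ∈ MM g i := zero_mem _
  have hn : -(gW i : SurfCoh n g) ∈ MM g i := neg_mem hw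
  have hl := mem_MM i l
  have hm := mem_MM i m
  show l.evalAB i * m.evalAB i ∈ MM g i
  cases l with
  | one => simpa [Letter.evalAB] using hm
  | la p =>
    cases m with
    | one => simpa [Letter.evalAB] using hl
    | la q => simpa [Letter.evalAB, gA_gA] using h0
    | lb q =>
      by_cases h : p = q
      · subst h; simpa [Letter.evalAB, gA_gB_same] using hw
      · simpa [Letter.evalAB, gA_gB_ne i h] using h0
    | lw => simpa [Letter.evalAB, gA_gW] using h0
  | lb p =>
    cases m with
    | one => simpa [Letter.evalAB] using hl
    | lb q => simpa [Letter.evalAB, gB_gB] using h0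
    | la q =>
      by_cases h : q = p
      · subst h; simpa [Letter.evalAB, gB_gA, gA_gB_same] using hw
      · simpa [Letter.evalAB, gB_gA, gA_gB_ne i h] using h0
    | lw => simpa [Letter.evalAB, gB_gW] using h0
  | lw =>
    cases m with
    | one => simpa [Letter.evalAB] using hl
    | lb q => simpa [Letter.evalAB, gW_gB] using h0
    | la q => simpa [Letter.evalAB, gW_gA] using h0
    | lw => simpa [Letter.evalAB, gW_gW] using h0

theorem evalAB_gen (i : Fin n) (l : Letter g) :
    l.evalAB i = 1 ∨ ∃ u, l.evalAB i = gen u := by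
  cases l with
  | one => exact Or.inl rfl
  | la p => exact Or.inr ⟨.a i p, rfl⟩
  | lb p => exact Or.inr ⟨.b i p, rfl⟩
  | lw => exact Or.inr ⟨.w i, rfl⟩

theorem MM_comm (i j : Fin n) : MM g j * MM g i ≤ MM g i * MM g j := by
  conv_lhs => rw [MM, MM, Submodule.span_mul_span]
  rw [Submodule.span_le]
  rintro _ ⟨_, ⟨l, rfl⟩, _, ⟨m, rfl⟩, rfl⟩
  show l.evalAB j * m.evalAB i ∈ MM g i * MM g j
  have key : m.evalAB i * l.evalAB j ∈ MM g i * MM g j :=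
    Submodule.mul_mem_mul (mem_MM i m) (mem_MM j l)
  rcases evalAB_gen j l with h | ⟨u, h⟩
  · rw [h] at key ⊢; simpa using key
  · rcases evalAB_gen i m with h' | ⟨v, h'⟩
    · rw [h'] at key ⊢; simpa using key
    · rw [h, h'] at key
      rw [h, h', gen_koszul]
      exact Submodule.smul_mem _ _ key

theorem MM_zero [NeZero n] [NeZero g] : MM g (0 : Fin n) = LL g 0 := by
  unfold MM LL
  congr 2
  funext l
  cases l <;> simp [Letter.evalAB, Letter.evalXY, gX, gY]

theorem MM_le [NeZero n] [NeZero g] (i : Fin n) : MM g i ≤ LL g i ⊔ MM g 0 := by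
  conv_lhs => rw [MM]
  rw [Submodule.span_le]
  rintro _ ⟨l, rfl⟩
  have hl := mem_LL i l
  have hl0 := mem_MM (0 : Fin n) l
  show l.evalAB i ∈ LL g i ⊔ MM g 0
  by_cases hi : i = 0
  · subst hi; exact Submodule.mem_sup_right hl0
  cases l with
  | one => exact Submodule.mem_sup_left hl
  | lw => exact Submodule.mem_sup_left hl
  | la p =>
    by_cases hp : p = 0
    · have := Submodule.add_mem_sup hl hl0
      simpa [Letter.evalAB, Letter.evalXY, gX, hp, hi] using this
    · refine Submodule.mem_sup_left ?_
      simpa [Letter.evalAB, Letter.evalXY, gX, hp] using hl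
  | lb p =>
    by_cases hp : p = 0
    · have := Submodule.add_mem_sup hl hl0
      simpa [Letter.evalAB, Letter.evalXY, gY, hp, hi] using this
    · refine Submodule.mem_sup_left ?_
      simpa [Letter.evalAB, Letter.evalXY, gY, hp] using hl

theorem LL_le [NeZero n] [NeZero g] (i : Fin n) : LL g i ≤ MM g i ⊔ MM g 0 := by
  conv_lhs => rw [LL]
  rw [Submodule.span_le]
  rintro _ ⟨l, rfl⟩
  have hl := mem_MM i l
  have hl0 := mem_MM (0 : Fin n) l
  show l.evalXY i ∈ MM g i ⊔ MM g 0
  cases l with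
  | one => exact Submodule.mem_sup_left hl
  | lw => exact Submodule.mem_sup_left hl
  | la p =>
    simp only [Letter.evalXY, gX]
    split_ifs
    · exact sub_mem (Submodule.mem_sup_left hl) (Submodule.mem_sup_right hl0)
    · exact Submodule.mem_sup_left hl
  | lb p =>
    simp only [Letter.evalXY, gY]
    split_ifs
    · exact sub_mem (Submodule.mem_sup_left hl) (Submodule.mem_sup_right hl0)
    · exact Submodule.mem_sup_left hl

theorem sm_right {R : Type*} [Ring R] [Algebra ℚ R] {P Q S : Submodule ℚ R} (h : P ≤ Q) :
    S * P ≤ S * Q := mul_le_mul' le_rfl h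

theorem sm_left {R : Type*} [Ring R] [Algebra ℚ R] {P Q S : Submodule ℚ R} (h : P ≤ Q) :
    P * S ≤ Q * S := mul_le_mul' h le_rfl

theorem prod_step [NeZero n] [NeZero g] (t : List (Fin n)) :
    ∀ P : Submodule ℚ (SurfCoh n g), 1 ≤ P → P * P ≤ P → MM g 0 ≤ P →
      (∀ j, MM g j * P ≤ P * MM g j) →
      ∃ Q, Q = P * (t.map (LL g)).prod ∧ 1 ≤ Q ∧ Q * Q ≤ Q ∧ P ≤ Q ∧ ∀ i ∈ t, MM g i ≤ Q := by
  induction t with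
  | nil => intro P h1 h2 _ _; exact ⟨P, by simp, h1, h2, le_rfl, by simp⟩
  | cons i t ih =>
    intro P h1 h2 h0 hc
    have hPL : P * LL g i = P * MM g i := by
      apply le_antisymm
      · calc P * LL g i ≤ P * (MM g i ⊔ MM g 0) := sm_right (LL_le i)
          _ = P * MM g i ⊔ P * MM g 0 := Submodule.mul_sup _ _ _
          _ ≤ P * MM g i := by
            refine sup_le le_rfl ?_
            calc P * MM g 0 ≤ P * P := sm_right h0
              _ ≤ P := h2
              _ = P * 1 := (mul_one P).symm
              _ ≤ P * MM g i := sm_right (one_le_MM i)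
      · calc P * MM g i ≤ P * (LL g i ⊔ MM g 0) := sm_right (MM_le i)
          _ = P * LL g i ⊔ P * MM g 0 := Submodule.mul_sup _ _ _
          _ ≤ P * LL g i := by
            refine sup_le le_rfl ?_
            calc P * MM g 0 ≤ P * P := sm_right h0
              _ ≤ P := h2
              _ = P * 1 := (mul_one P).symm
              _ ≤ P * LL g i := sm_right (one_le_LL i)
    have hP : P ≤ P * MM g i := by
      calc P = P * 1 := (mul_one P).symm
        _ ≤ P * MM g i := sm_right (one_le_MM i)
    have hM : MM g i ≤ P * MM g i := by
      calc MM g i = 1 * MM g i := (one_mul _).symm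
        _ ≤ P * MM g i := sm_left h1
    obtain ⟨Q, hQ, q1, q2, q3, q4⟩ := ih (P * MM g i) (h1.trans hP)
      (by
        calc P * MM g i * (P * MM g i) = P * (MM g i * P) * MM g i := by simp only [mul_assoc]
          _ ≤ P * (P * MM g i) * MM g i :=
            sm_left (sm_right (hc i))
          _ = (P * P) * (MM g i * MM g i) := by simp only [mul_assoc]
          _ ≤ P * MM g i := mul_le_mul' h2 (MM_mul i))
      (h0.trans hP)
      (fun j => by
        calc MM g j * (P * MM g i) = MM g j * P * MM g i := (mul_assoc _ _ _).symm
          _ ≤ P * MM g j * MM g i := sm_left (hc j)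
          _ = P * (MM g j * MM g i) := mul_assoc _ _ _
          _ ≤ P * (MM g i * MM g j) := sm_right (MM_comm i j)
          _ = P * MM g i * MM g j := (mul_assoc _ _ _).symm)
    refine ⟨Q, ?_, q1, q2, hP.trans q3, ?_⟩
    · rw [hQ, List.map_cons, List.prod_cons, ← mul_assoc, hPL]
    · intro j hj
      rcases List.mem_cons.1 hj with rfl | hj
      · exact hM.trans q3
      · exact q4 j hj

theorem prod_span_le {R ι : Type*} [Ring R] [Algebra ℚ R] (k : ℕ) :
    ∀ f : Fin k → ι → R, (List.ofFn fun i => Submodule.span ℚ (Set.range (f i))).prod ≤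
      Submodule.span ℚ (Set.range fun v : Fin k → ι => (List.ofFn fun i => f i (v i)).prod) := by
  induction k with
  | zero =>
    intro f
    simp only [List.ofFn_zero, List.prod_nil]
    exact Submodule.one_le.2 (Submodule.subset_span ⟨Fin.elim0, rfl⟩)
  | succ k ih =>
    intro f
    rw [List.ofFn_succ, List.prod_cons]
    refine (sm_right (ih fun i => f i.succ)).trans ?_
    rw [Submodule.span_mul_span, Submodule.span_le]
    rintro _ ⟨_, ⟨l, rfl⟩, _, ⟨v, rfl⟩, rfl⟩
    refine Submodule.subset_span ⟨Fin.cons l v, ?_⟩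
    simp [List.ofFn_succ]

theorem span_monXY [NeZero n] [NeZero g] :
    Submodule.span ℚ (Set.range (monXY : (Fin n → Letter g) → SurfCoh n g)) = ⊤ := by
  rw [eq_top_iff]
  refine le_trans ?_ (prod_span_le n fun i (l : Letter g) => (l.evalXY i : SurfCoh n g))
  obtain ⟨m, rfl⟩ : ∃ m, n = m + 1 := ⟨n - 1, (Nat.succ_pred (NeZero.ne n)).symm⟩
  have e : (List.ofFn fun i : Fin (m + 1) =>
      Submodule.span ℚ (Set.range fun l : Letter g => (l.evalXY i : SurfCoh (m + 1) g))).prod =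
      MM g 0 * ((List.ofFn (Fin.succ : Fin m → Fin (m + 1))).map (LL g)).prod := by
    rw [MM_zero, List.map_ofFn, List.ofFn_succ, List.prod_cons]
    rfl
  rw [e]
  obtain ⟨Q, hQ, q1, q2, q3, q4⟩ := prod_step (List.ofFn (Fin.succ : Fin m → Fin (m + 1)))
    (MM g 0) (one_le_MM 0) (MM_mul 0) le_rfl (fun j => MM_comm 0 j)
  rw [← hQ]
  have hall : ∀ i, MM g i ≤ Q := by
    intro i
    refine Fin.cases q3 (fun j => q4 _ ?_) i
    simp [List.mem_ofFn]
  let S : Subalgebra ℚ (SurfCoh (m + 1) g) :=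
    Q.toSubalgebra (Submodule.one_le.1 q1) (fun x y hx hy => q2 (Submodule.mul_mem_mul hx hy))
  have hS : Algebra.adjoin ℚ (Set.range (gen : SurfGen (m + 1) g → SurfCoh (m + 1) g)) ≤ S := by
    rw [Algebra.adjoin_le_iff]
    rintro _ ⟨u, rfl⟩
    cases u with
    | a i p => exact hall i (mem_MM i (.la p))
    | b i p => exact hall i (mem_MM i (.lb p))
    | w i => exact hall i (mem_MM i .lw)
  rw [adjoin_gen] at hS
  intro x _
  exact hS (Algebra.mem_top : x ∈ (⊤ : Subalgebra ℚ _))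

/-! ### Bad monomials vanish -/

theorem exists_factor {R : Type*} [Ring R] (k : ℕ) : ∀ (f : Fin k → R) (j : Fin k),
    ∃ p q, (List.ofFn f).prod = p * f j * q := by
  intro f j
  obtain ⟨s, t, h⟩ := List.append_of_mem (List.mem_ofFn.2 ⟨j, rfl⟩ : f j ∈ List.ofFn f)
  exact ⟨s.prod, t.prod, by rw [h]; simp [mul_assoc]⟩

theorem exists_factor₂ {R : Type*} [Ring R] (k : ℕ) : ∀ (f : Fin k → R) (i j : Fin k), i < j →
    ∃ p m q, (List.ofFn f).prod = p * f i * m * f j * q := by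
  induction k with
  | zero => intro f i; exact i.elim0
  | succ k ih =>
    intro f i j hij
    obtain ⟨j, rfl⟩ := Fin.exists_succ_eq.2 (Fin.ne_zero_of_lt hij)
    rw [List.ofFn_succ, List.prod_cons]
    induction i using Fin.cases with
    | zero =>
      obtain ⟨p, q, h⟩ := exists_factor k (fun i => f i.succ) j
      exact ⟨1, p, q, by rw [h]; simp [mul_assoc]⟩
    | succ i =>
      obtain ⟨p, m, q, h⟩ := ih (fun i => f i.succ) i j (by simpa using hij)
      exact ⟨f 0 * p, m, q, by rw [h]; simp [mul_assoc]⟩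

theorem toA_rel [NeZero n] [NeZero g] {x y : SurfCoh n g} (h : ARel n g x y) :
    toA n g x = toA n g y := RingQuot.mkAlgHom_rel ℚ h

theorem toA_surj [NeZero n] [NeZero g] : Function.Surjective (toA n g) :=
  RingQuot.mkAlgHom_surjective ℚ _

theorem gX_ne [NeZero n] [NeZero g] (i : Fin n) {p : Fin g} (hp : p ≠ 0) : gX i p = gA i p := by
  simp [gX, hp]

theorem gY_ne [NeZero n] [NeZero g] (i : Fin n) {p : Fin g} (hp : p ≠ 0) : gY i p = gB i p := by
  simp [gY, hp]

theorem toA_AA [NeZero n] [NeZero g] {i j : Fin n} {p q : Fin g} (hij : i ≠ j) (hp : p ≠ 0)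
    (hq : q ≠ 0) : toA n g (gA i p) * toA n g (gA j q) = 0 := by
  have := toA_rel (ARel.xx i j p q hij hp hq)
  simpa [gX_ne, gY_ne, hp, hq] using this

theorem toA_AB [NeZero n] [NeZero g] {i j : Fin n} {p q : Fin g} (hij : i ≠ j) (hp : p ≠ 0)
    (hq : q ≠ 0) : toA n g (gA i p) * toA n g (gB j q) = 0 := by
  have := toA_rel (ARel.xy i j p q hij hp hq)
  simpa [gX_ne, gY_ne, hp, hq] using this

theorem toA_BB [NeZero n] [NeZero g] {i j : Fin n} {p q : Fin g} (hij : i ≠ j) (hp : p ≠ 0)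
    (hq : q ≠ 0) : toA n g (gB i p) * toA n g (gB j q) = 0 := by
  have := toA_rel (ARel.yy i j p q hij hp hq)
  simpa [gX_ne, gY_ne, hp, hq] using this

theorem toA_BA [NeZero n] [NeZero g] {i j : Fin n} {p q : Fin g} (hij : i ≠ j) (hp : p ≠ 0)
    (hq : q ≠ 0) : toA n g (gB i p) * toA n g (gA j q) = 0 := by
  have h := gen_koszul (SurfGen.b i p) (SurfGen.a j q)
  have h2 := toA_AB hij.symm hq hp
  rw [← map_mul] at h2 ⊢
  rw [gB_eq, gA_eq, h, ← gB_eq, ← gA_eq, map_smul, h2, smul_zero]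

theorem exc_mul [NeZero n] [NeZero g] (hg : 2 ≤ g) {i j : Fin n} (hij : i ≠ j) (l m : Letter g)
    (hl : l.isExc) (hm : m.isExc) :
    toA n g (l.evalAB i) * toA n g (m.evalAB j) = 0 := by
  obtain ⟨r, hr⟩ : ∃ r : Fin g, r ≠ 0 :=
    ⟨⟨1, hg⟩, by intro h; simpa using congrArg Fin.val h⟩
  have hW : ∀ k : Fin n, toA n g (gW k) = toA n g (gA k r) * toA n g (gB k r) := fun k => by
    rw [← gA_gB_same k r, map_mul]
  cases l with
  | one => exact hl.elim
  | la p =>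
    cases m with
    | one => exact hm.elim
    | la q => exact toA_AA hij hl hm
    | lb q => exact toA_AB hij hl hm
    | lw => simp only [Letter.evalAB]; rw [hW, ← mul_assoc, toA_AA hij hl hr, zero_mul]
  | lb p =>
    cases m with
    | one => exact hm.elim
    | la q => exact toA_BA hij hl hm
    | lb q => exact toA_BB hij hl hm
    | lw => simp only [Letter.evalAB]; rw [hW, ← mul_assoc, toA_BA hij hl hr, zero_mul]
  | lw =>
    cases m with
    | one => exact hm.elim
    | la q => simp only [Letter.evalAB]; rw [hW, mul_assoc, toA_BA hij hr hm, mul_zero]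
    | lb q => simp only [Letter.evalAB]; rw [hW, mul_assoc, toA_BB hij hr hm, mul_zero]
    | lw =>
      simp only [Letter.evalAB]
      rw [hW i, hW j, mul_assoc, ← mul_assoc (toA n g (gB i r)), toA_BA hij hr hr, zero_mul,
        mul_zero]

theorem evalXY_exc [NeZero n] [NeZero g] (i : Fin n) (l : Letter g) (hl : l.isExc) :
    l.evalXY i = l.evalAB i := by
  cases l with
  | one => rfl
  | la p => exact gX_ne i hl
  | lb p => exact gY_ne i hl
  | lw => rfl

theorem exc_gen [NeZero g] (i : Fin n) (l : Letter g) (hl : l.isExc) :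
    ∃ u, l.evalAB i = gen u := by
  cases l with
  | one => exact hl.elim
  | la p => exact ⟨.a i p, rfl⟩
  | lb p => exact ⟨.b i p, rfl⟩
  | lw => exact ⟨.w i, rfl⟩

theorem bad_zero [NeZero n] [NeZero g] (hg : 2 ≤ g) (v : Fin n → Letter g)
    (hv : ¬ {i : Fin n | (v i).isExc}.Subsingleton) : toA n g (monXY v) = 0 := by
  have : ∃ i j, i < j ∧ (v i).isExc ∧ (v j).isExc := by
    rw [Set.not_subsingleton_iff] at hv
    obtain ⟨i, hi, j, hj, hij⟩ := hv
    rcases lt_or_gt_of_ne hij with h | h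
    · exact ⟨i, j, h, hi, hj⟩
    · exact ⟨j, i, h, hj, hi⟩
  obtain ⟨i, j, hij, hi, hj⟩ := this
  obtain ⟨p, m, q, h⟩ := exists_factor₂ n (fun i => ((v i).evalXY i : SurfCoh n g)) i j hij
  rw [monXY, h, evalXY_exc i _ hi, evalXY_exc j _ hj]
  have h2 := exc_mul hg hij.ne (v i) (v j) hi hj
  obtain ⟨u, hu⟩ := exc_gen i (v i) hi
  rw [hu] at h2 ⊢
  obtain ⟨z, hz⟩ := gen_move u m
  have e : p * gen u * m * (v j).evalAB j * q = p * z * (gen u * (v j).evalAB j) * q := by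
    rw [mul_assoc p, hz]; simp only [mul_assoc]
  rw [e, map_mul, map_mul, map_mul (toA n g) (gen u), h2, mul_zero, zero_mul]

theorem span_basisFun [NeZero n] [NeZero g] (hg : 2 ≤ g) :
    Submodule.span ℚ (Set.range (basisFunXY n g)) = ⊤ := by
  have h : Submodule.map (toA n g).toLinearMap
      (Submodule.span ℚ (Set.range (monXY : (Fin n → Letter g) → SurfCoh n g))) = ⊤ := by
    rw [span_monXY, Submodule.map_top, LinearMap.range_eq_top]
    exact toA_surj
  rw [eq_top_iff, ← h, Submodule.map_span, Submodule.span_le]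
  rintro _ ⟨_, ⟨v, rfl⟩, rfl⟩
  by_cases hv : {i : Fin n | (v i).isExc}.Subsingleton
  · exact Submodule.subset_span ⟨⟨v, hv⟩, rfl⟩
  · have := bad_zero hg v hv
    show toA n g (monXY v) ∈ _
    rw [this]
    exact zero_mem _

/-! ### A matrix model -/

section Model

open Classical Matrix

noncomputable instance letterFintype (g : ℕ) : Fintype (Letter g) :=
  Fintype.ofInjective
    (fun l : Letter g => (match l with
      | .one => Sum.inl false
      | .lw => Sum.inl true
      | .la p => Sum.inr (false, p)
      | .lb p => Sum.inr (true, p) : Bool ⊕ (Bool × Fin g)))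
    (by intro l m h; cases l <;> cases m <;> simp_all)

/-- Square matrices indexed by letters. -/
abbrev LMat (g : ℕ) := Matrix (Letter g) (Letter g) ℚ

/-- Parity of a letter. -/
def lsign : Letter g → ℚ
  | .one => 1
  | .la _ => -1
  | .lb _ => -1
  | .lw => 1

/-- The parity operator. -/
noncomputable def sg (g : ℕ) : LMat g := Matrix.diagonal lsign

/-- Multiplication by `a(p)`. -/
noncomputable def alpha (p : Fin g) : LMat g :=
  Matrix.single (.la p) .one 1 + Matrix.single .lw (.lb p) 1

/-- Multiplication by `b(p)`. -/
noncomputable def beta (p : Fin g) : LMat g :=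
  Matrix.single (.lb p) .one 1 - Matrix.single .lw (.la p) 1

/-- Multiplication by `ω`. -/
noncomputable def omg (g : ℕ) : LMat g := Matrix.single .lw .one 1

theorem sg_sq : sg g * sg g = 1 := by
  rw [sg, Matrix.diagonal_mul_diagonal, ← Matrix.diagonal_one]
  congr 1
  funext l
  cases l <;> simp [lsign]

theorem alpha_alpha (p q : Fin g) : alpha p * alpha q = 0 := by
  simp [alpha, add_mul, mul_add]

theorem beta_beta (p q : Fin g) : beta p * beta q = 0 := by
  simp [beta, sub_mul, mul_sub]

theorem alpha_beta (p q : Fin g) : alpha p * beta q = if p = q then omg g else 0 := by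
  split_ifs with h
  · subst h; simp [alpha, beta, omg, add_mul, mul_sub]
  · simp [alpha, beta, add_mul, mul_sub, h]

theorem beta_alpha (p q : Fin g) : beta p * alpha q = if q = p then - omg g else 0 := by
  split_ifs with h
  · subst h; simp [alpha, beta, omg, sub_mul, mul_add]
  · simp [alpha, beta, sub_mul, mul_add, Ne.symm h]

theorem omg_omg : omg g * omg g = 0 := by simp [omg]
theorem alpha_omg (p : Fin g) : alpha p * omg g = 0 := by simp [omg, alpha, add_mul]
theorem omg_alpha (p : Fin g) : omg g * alpha p = 0 := by simp [omg, alpha, mul_add]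
theorem beta_omg (p : Fin g) : beta p * omg g = 0 := by simp [omg, beta, sub_mul]
theorem omg_beta (p : Fin g) : omg g * beta p = 0 := by simp [omg, beta, mul_sub]

theorem sg_single (l m : Letter g) (c : ℚ) :
    sg g * Matrix.single l m c = Matrix.single l m (lsign l * c) := by
  ext x y
  rw [sg, Matrix.diagonal_mul, Matrix.single_apply, Matrix.single_apply]
  split_ifs with h
  · rw [h.1]
  · simp

theorem single_sg (l m : Letter g) (c : ℚ) :
    Matrix.single l m c * sg g = Matrix.single l m (c * lsign m) := by
  ext x y
  rw [sg, Matrix.mul_diagonal, Matrix.single_apply, Matrix.single_apply]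
  split_ifs with h
  · rw [h.2]
  · simp

/-- Slot of a generator. -/
def slot : SurfGen n g → Fin n
  | .a i _ => i
  | .b i _ => i
  | .w i => i

/-- Slot matrix of a generator. -/
noncomputable def smat : SurfGen n g → LMat g
  | .a _ p => alpha p
  | .b _ p => beta p
  | .w _ => omg g

theorem sg_smat (u : SurfGen n g) : smat u * sg g = ((-1 : ℚ) ^ u.deg) • (sg g * smat u) := by
  cases u <;> simp [smat, SurfGen.deg, alpha, beta, omg, mul_add, add_mul, mul_sub, sub_mul,
    sg_single, single_sg, lsign, ← Matrix.single_neg] <;> abel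

theorem smat_sg_pow (u : SurfGen n g) (d : ℕ) :
    smat u * sg g ^ d = ((-1 : ℚ) ^ (u.deg * d)) • (sg g ^ d * smat u) := by
  induction d with
  | zero => simp
  | succ d ih =>
    rw [pow_succ, ← mul_assoc, ih, smul_mul_assoc, mul_assoc, sg_smat, mul_smul_comm, smul_smul,
      ← pow_add, mul_assoc, Nat.mul_succ]

theorem sg_pow_smat (u : SurfGen n g) (d : ℕ) :
    sg g ^ d * smat u = ((-1 : ℚ) ^ (d * u.deg)) • (smat u * sg g ^ d) := by
  rw [smat_sg_pow, smul_smul, mul_comm d, ← mul_pow]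
  simp

theorem smat_smat (u v : SurfGen n g) :
    smat u * smat v = ((-1 : ℚ) ^ (u.deg * v.deg)) • (smat v * smat u) := by
  cases u <;> cases v <;> simp [smat, SurfGen.deg, alpha_alpha, alpha_beta, beta_alpha, beta_beta,
    omg_omg, alpha_omg, beta_omg, omg_alpha, omg_beta]

/-- Square matrices indexed by words. -/
abbrev WMat (n g : ℕ) := Matrix (Fin n → Letter g) (Fin n → Letter g) ℚ

/-- Kronecker product of slot matrices. -/
def KK (T : Fin n → LMat g) : WMat n g := Matrix.of fun v w => ∏ k, T k (v k) (w k)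

theorem KK_mul (T S : Fin n → LMat g) : KK T * KK S = KK fun k => T k * S k := by
  ext v w
  simp only [KK, Matrix.mul_apply, Matrix.of_apply]
  rw [Finset.prod_univ_sum, Fintype.piFinset_univ]
  exact Finset.sum_congr rfl fun x _ => Finset.prod_mul_distrib.symm

theorem KK_smul {T S : Fin n → LMat g} (c : ℚ) (i : Fin n) (hi : T i = c • S i)
    (h : ∀ k, k ≠ i → T k = S k) : KK T = c • KK S := by
  ext v w
  simp only [KK, Matrix.of_apply, Matrix.smul_apply, smul_eq_mul]
  rw [← Finset.mul_prod_erase _ _ (Finset.mem_univ i),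
    ← Finset.mul_prod_erase _ (fun k => S k (v k) (w k)) (Finset.mem_univ i), hi,
    Matrix.smul_apply, smul_eq_mul, mul_assoc]
  congr 2
  exact Finset.prod_congr rfl fun k hk => by rw [h k (Finset.ne_of_mem_erase hk)]

/-- Slot matrices of the operator attached to a generator. -/
noncomputable def JT (u : SurfGen n g) (k : Fin n) : LMat g :=
  if k < slot u then sg g ^ u.deg else if k = slot u then smat u else 1

/-- The operator attached to a generator. -/
noncomputable def JJ (u : SurfGen n g) : WMat n g := KK (JT u)

theorem JT_lt (u : SurfGen n g) {k : Fin n} (h : k < slot u) : JT u k = sg g ^ u.deg := by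
  simp [JT, h]
theorem JT_eq (u : SurfGen n g) : JT u (slot u) = smat u := by
  simp [JT]
theorem JT_gt (u : SurfGen n g) {k : Fin n} (h : slot u < k) : JT u k = 1 := by
  simp [JT, h.not_gt, h.ne']

theorem JT_comm_of_ne (u v : SurfGen n g) {k : Fin n} (h1 : k ≠ slot u) (h2 : k ≠ slot v) :
    JT u k * JT v k = JT v k * JT u k := by
  rcases lt_or_gt_of_ne h1 with h | h
  · rcases lt_or_gt_of_ne h2 with h' | h'
    · rw [JT_lt u h, JT_lt v h', ← pow_add, ← pow_add, add_comm]
    · rw [JT_gt v h', one_mul, mul_one]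
  · rw [JT_gt u h, one_mul, mul_one]

theorem JJ_koszul (u v : SurfGen n g) :
    JJ u * JJ v = ((-1 : ℚ) ^ (u.deg * v.deg)) • (JJ v * JJ u) := by
  rw [JJ, JJ, KK_mul, KK_mul]
  rcases lt_trichotomy (slot u) (slot v) with h | h | h
  · refine KK_smul _ (slot u) ?_ fun k hk => ?_
    · rw [JT_eq, JT_lt v h, smat_sg_pow]
    · by_cases hk' : k = slot v
      · subst hk'; rw [JT_gt u h, one_mul, mul_one]
      · exact JT_comm_of_ne u v hk hk'
  · refine KK_smul _ (slot u) ?_ fun k hk => ?_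
    · rw [JT_eq, h, JT_eq, smat_smat]
    · exact JT_comm_of_ne u v hk (h ▸ hk)
  · refine KK_smul _ (slot v) ?_ fun k hk => ?_
    · rw [JT_eq, JT_lt u h, sg_pow_smat]
    · by_cases hk' : k = slot u
      · subst hk'; rw [JT_gt v h, one_mul, mul_one]
      · exact JT_comm_of_ne u v hk' hk

theorem JJ_mul_zero (u v : SurfGen n g) (h : slot u = slot v) (h0 : smat u * smat v = 0) :
    JJ u * JJ v = 0 := by
  rw [JJ, JJ, KK_mul]
  rw [KK_smul (S := fun k => JT u k * JT v k) 0 (slot u) _ fun k hk => rfl, zero_smul]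
  rw [JT_eq, h, JT_eq, h0, zero_smul]

theorem JJ_ab (i : Fin n) (p : Fin g) :
    JJ (SurfGen.a i p) * JJ (SurfGen.b i p) = JJ (SurfGen.w i) := by
  rw [JJ, JJ, KK_mul, JJ]
  congr 1
  funext k
  rcases lt_trichotomy k i with h | h | h
  · simp only [JT, slot, if_pos h, SurfGen.deg, pow_one, pow_two]
  · subst h; simp [JT, slot, smat, alpha_beta]
  · simp [JT, slot, h.not_gt, h.ne']

/-- Entries of `T` never lead from exceptional to non-exceptional letters. -/
def Pres [NeZero g] (T : LMat g) : Prop := ∀ l m, T l m ≠ 0 → m.isExc → l.isExc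

/-- The image of `T` is exceptional. -/
def ImExc [NeZero g] (T : LMat g) : Prop := ∀ l m, T l m ≠ 0 → l.isExc

theorem Pres.one [NeZero g] : Pres (1 : LMat g) := by
  intro l m h hm
  by_cases e : l = m
  · rwa [e]
  · exact (h (Matrix.one_apply_ne e)).elim

theorem Pres.sg [NeZero g] : Pres (sg g) := by
  intro l m h hm
  by_cases e : l = m
  · rwa [e]
  · exact (h (Matrix.diagonal_apply_ne _ e)).elim

theorem Pres.mul [NeZero g] {T S : LMat g} (hT : Pres T) (hS : Pres S) : Pres (T * S) := by
  intro l m h hm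
  rw [Matrix.mul_apply] at h
  obtain ⟨x, _, hx⟩ := Finset.exists_ne_zero_of_sum_ne_zero h
  exact hT _ _ (left_ne_zero_of_mul hx) (hS _ _ (right_ne_zero_of_mul hx) hm)

theorem Pres.sg_pow [NeZero g] (d : ℕ) : Pres (SurfProof.sg g ^ d) := by
  induction d with
  | zero => simpa using Pres.one
  | succ d ih => rw [pow_succ]; exact ih.mul Pres.sg

theorem ImExc.mul_right [NeZero g] {T S : LMat g} (hT : ImExc T) : ImExc (T * S) := by
  intro l m h
  rw [Matrix.mul_apply] at h
  obtain ⟨x, _, hx⟩ := Finset.exists_ne_zero_of_sum_ne_zero h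
  exact hT _ _ (left_ne_zero_of_mul hx)

theorem ImExc.mul_left [NeZero g] {T S : LMat g} (hT : ImExc T) (hS : Pres S) :
    ImExc (S * T) := by
  intro l m h
  rw [Matrix.mul_apply] at h
  obtain ⟨x, _, hx⟩ := Finset.exists_ne_zero_of_sum_ne_zero h
  exact hS _ _ (left_ne_zero_of_mul hx) (hT _ _ (right_ne_zero_of_mul hx))

theorem Pres.smat [NeZero g] (u : SurfGen n g) : Pres (smat u) := by
  intro l m h hm
  cases u <;> cases l <;> cases m <;>
    simp_all [SurfProof.smat, alpha, beta, omg, Matrix.single_apply, Letter.isExc]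

theorem ImExc.alpha [NeZero g] {p : Fin g} (hp : p ≠ 0) : ImExc (alpha p) := by
  intro l m h
  cases l <;> cases m <;>
    simp_all [SurfProof.alpha, Matrix.single_apply, Letter.isExc]

theorem ImExc.beta [NeZero g] {p : Fin g} (hp : p ≠ 0) : ImExc (beta p) := by
  intro l m h
  cases l <;> cases m <;>
    simp_all [SurfProof.beta, Matrix.single_apply, Letter.isExc]

theorem Pres.JT [NeZero g] (u : SurfGen n g) (k : Fin n) : Pres (JT u k) := by
  unfold SurfProof.JT
  split_ifs
  · exact Pres.sg_pow _
  · exact Pres.smat u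
  · exact Pres.one

/-- Good words. -/
abbrev Good (n g : ℕ) [NeZero g] : Type :=
  {v : Fin n → Letter g // {i : Fin n | (v i).isExc}.Subsingleton}

/-- Restriction of a matrix to good words. -/
def res [NeZero g] (P : WMat n g) : Matrix (Good n g) (Good n g) ℚ :=
  P.submatrix Subtype.val Subtype.val

theorem JJ_apply (u : SurfGen n g) (v w : Fin n → Letter g) :
    JJ u v w = ∏ k, JT u k (v k) (w k) := rfl

theorem JJ_good [NeZero g] (u : SurfGen n g) {v w : Fin n → Letter g}
    (hv : {i : Fin n | (v i).isExc}.Subsingleton) (h : JJ u v w ≠ 0) :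
    {i : Fin n | (w i).isExc}.Subsingleton := by
  refine hv.anti fun i hi => ?_
  rw [JJ_apply] at h
  have := Finset.prod_ne_zero_iff.1 h i (Finset.mem_univ i)
  exact Pres.JT u i _ _ this hi

theorem res_mul [NeZero g] (u : SurfGen n g) (Q : WMat n g) :
    res (JJ u * Q) = res (JJ u) * res Q := by
  ext v w
  simp only [res, Matrix.submatrix_apply, Matrix.mul_apply]
  symm
  refine Finset.sum_of_injOn (Subtype.val) Subtype.val_injective.injOn (by simp) ?_ (by simp)
  intro x _ hx
  by_contra h
  exact hx ⟨⟨x, JJ_good u v.2 (left_ne_zero_of_mul h)⟩, by simp, rfl⟩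

theorem res_zero [NeZero g] : res (0 : WMat n g) = 0 := rfl
theorem res_smul [NeZero g] (c : ℚ) (P : WMat n g) : res (c • P) = c • res P := rfl

theorem res_exc [NeZero g] (u v : SurfGen n g) (h : slot u ≠ slot v) (hu : ImExc (smat u))
    (hv : ImExc (smat v)) : res (JJ u) * res (JJ v) = 0 := by
  rw [← res_mul, JJ, JJ, KK_mul]
  ext x y
  show (∏ k, (JT u k * JT v k) (x.1 k) (y.1 k)) = 0
  by_contra hne
  rw [← Ne, Finset.prod_ne_zero_iff] at hne
  have h1 : ImExc (JT u (slot u) * JT v (slot u)) := by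
    rw [JT_eq]; exact hu.mul_right
  have h2 : ImExc (JT u (slot v) * JT v (slot v)) := by
    rw [JT_eq v]; exact hv.mul_left (Pres.JT u _)
  exact h (x.2 (h1 _ _ (hne _ (Finset.mem_univ _))) (h2 _ _ (hne _ (Finset.mem_univ _))))

/-- Matrix representation of the cohomology ring. -/
noncomputable def rhoS (n g : ℕ) [NeZero g] :
    SurfCoh n g →ₐ[ℚ] Matrix (Good n g) (Good n g) ℚ :=
  RingQuot.liftAlgHom ℚ ⟨FreeAlgebra.lift ℚ fun u => res (JJ u), by
    intro x y h
    induction h with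
    | aa i p q =>
      simp only [map_mul, FreeAlgebra.lift_ι_apply, map_zero]
      rw [← res_mul, JJ_mul_zero (.a i p) (.a i q) rfl (alpha_alpha p q), res_zero]
    | bb i p q =>
      simp only [map_mul, FreeAlgebra.lift_ι_apply, map_zero]
      rw [← res_mul, JJ_mul_zero (.b i p) (.b i q) rfl (beta_beta p q), res_zero]
    | ab_eq i p =>
      simp only [map_mul, FreeAlgebra.lift_ι_apply]
      rw [← res_mul, JJ_ab]
    | ab_ne i p q hpq =>
      simp only [map_mul, FreeAlgebra.lift_ι_apply, map_zero]
      rw [← res_mul, JJ_mul_zero (.a i p) (.b i q) rfl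
        ((alpha_beta p q).trans (if_neg hpq)), res_zero]
    | koszul u v =>
      simp only [map_mul, map_smul, FreeAlgebra.lift_ι_apply]
      rw [← res_mul, ← res_mul, JJ_koszul, res_smul]⟩

theorem rhoS_gen [NeZero g] (u : SurfGen n g) : rhoS n g (gen u) = res (JJ u) := by
  have := RingQuot.liftAlgHom_mkAlgHom_apply ℚ
    (FreeAlgebra.lift ℚ fun u : SurfGen n g => res (JJ u)) (s := SurfRel n g)
  unfold rhoS gen mkS
  erw [this]
  simp

/-- Matrix representation of `A_g`. -/
noncomputable def rhoA (n g : ℕ) [NeZero n] [NeZero g] :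
    SurfA n g →ₐ[ℚ] Matrix (Good n g) (Good n g) ℚ :=
  RingQuot.liftAlgHom ℚ ⟨rhoS n g, by
    intro x y h
    induction h with
    | xx i j p q hij hp hq =>
      rw [map_mul, map_zero, gX_ne i hp, gX_ne j hq, gA_eq, gA_eq, rhoS_gen, rhoS_gen]
      exact res_exc _ _ hij (ImExc.alpha hp) (ImExc.alpha hq)
    | xy i j p q hij hp hq =>
      rw [map_mul, map_zero, gX_ne i hp, gY_ne j hq, gA_eq, gB_eq, rhoS_gen, rhoS_gen]
      exact res_exc _ _ hij (ImExc.alpha hp) (ImExc.beta hq)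
    | yy i j p q hij hp hq =>
      rw [map_mul, map_zero, gY_ne i hp, gY_ne j hq, gB_eq, gB_eq, rhoS_gen, rhoS_gen]
      exact res_exc _ _ hij (ImExc.beta hp) (ImExc.beta hq)⟩

theorem rhoA_gen [NeZero n] [NeZero g] (u : SurfGen n g) :
    rhoA n g (toA n g (gen u)) = res (JJ u) := by
  rw [← rhoS_gen]
  unfold rhoA toA
  erw [RingQuot.liftAlgHom_mkAlgHom_apply]

/-- The empty word. -/
def vac (n g : ℕ) [NeZero g] : Good n g :=
  ⟨fun _ => .one, fun i hi => (hi : False).elim⟩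

/-- Evaluation at the empty word. -/
noncomputable def ev (n g : ℕ) [NeZero n] [NeZero g] : SurfA n g →ₗ[ℚ] (Good n g → ℚ) where
  toFun z := rhoA n g z *ᵥ Pi.single (vac n g) 1
  map_add' x y := by rw [map_add, Matrix.add_mulVec]
  map_smul' c x := by rw [map_smul, Matrix.smul_mulVec]; rfl

theorem ev_mul [NeZero n] [NeZero g] (x y : SurfA n g) :
    ev n g (x * y) = rhoA n g x *ᵥ ev n g y := by
  show rhoA n g (x * y) *ᵥ _ = rhoA n g x *ᵥ (rhoA n g y *ᵥ _)
  rw [map_mul, Matrix.mulVec_mulVec]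

/-- The generator attached to a nontrivial letter, whose column is what it should be. -/
theorem smat_col (i : Fin n) (l : Letter g) (hl : l ≠ .one) :
    ∃ u : SurfGen n g, slot u = i ∧ ∀ m, smat u m .one = if m = l then 1 else 0 := by
  cases l with
  | one => exact (hl rfl).elim
  | la p =>
    exact ⟨.a i p, rfl, fun m => by cases m <;> simp [smat, alpha, Matrix.single_apply, eq_comm]⟩
  | lb p =>
    exact ⟨.b i p, rfl, fun m => by cases m <;> simp [smat, beta, Matrix.single_apply, eq_comm]⟩
  | lw =>
    exact ⟨.w i, rfl, fun m => by cases m <;> simp [smat, omg, Matrix.single_apply]⟩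

theorem lsign_ne (l : Letter g) : lsign l ≠ 0 := by cases l <;> simp [lsign]

theorem JT_diag (u : SurfGen n g) {k : Fin n} (hk : k ≠ slot u) :
    ∃ d : Letter g → ℚ, (∀ l, d l ≠ 0) ∧ JT u k = Matrix.diagonal d := by
  rcases lt_or_gt_of_ne hk with h | h
  · refine ⟨lsign ^ u.deg, fun l => pow_ne_zero _ (lsign_ne l), ?_⟩
    rw [JT_lt u h, sg, Matrix.diagonal_pow]
  · exact ⟨fun _ => 1, fun _ => one_ne_zero, by rw [JT_gt u h, Matrix.diagonal_one]⟩

theorem JJ_col (u : SurfGen n g) (v w : Fin n → Letter g) (hw : w (slot u) = .one)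
    (hv : ∀ k, k ≠ slot u → v k = w k)
    (hu : ∀ m, smat u m .one = if m = v (slot u) then 1 else 0) :
    ∃ c : ℚ, c ≠ 0 ∧ ∀ x, JJ u x w = if x = v then c else 0 := by
  refine ⟨JJ u v w, ?_, fun x => ?_⟩
  · rw [JJ_apply]
    refine Finset.prod_ne_zero_iff.2 fun k _ => ?_
    by_cases hk : k = slot u
    · rw [hk, JT_eq, hw, hu]; simp
    · obtain ⟨d, hd, e⟩ := JT_diag u hk
      rw [e, hv k hk]; simpa using hd _
  · split_ifs with h
    · rw [h]
    · obtain ⟨k, hk⟩ := Function.ne_iff.1 h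
      rw [JJ_apply]
      refine Finset.prod_eq_zero (Finset.mem_univ k) ?_
      by_cases hk' : k = slot u
      · subst hk'; rw [JT_eq, hw, hu, if_neg hk]
      · obtain ⟨d, hd, e⟩ := JT_diag u hk'
        rw [e, ← hv k hk', Matrix.diagonal_apply_ne _ hk]

theorem ev_range [NeZero n] [NeZero g] (s : Finset (Fin n)) :
    ∀ v : Good n g, (∀ i ∉ s, v.1 i = .one) → Pi.single v (1 : ℚ) ∈ LinearMap.range (ev n g) := by
  induction s using Finset.induction_on with
  | empty =>
    intro v hv
    have : v = vac n g := Subtype.ext (funext fun i => hv i (by simp))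
    exact ⟨1, by
      rw [this]
      show rhoA n g 1 *ᵥ _ = _
      rw [map_one, Matrix.one_mulVec]⟩
  | insert i s his ih =>
    intro v hv
    by_cases hvi : v.1 i = .one
    · refine ih v fun k hk => ?_
      by_cases e : k = i
      · rw [e, hvi]
      · exact hv k (by simp [e, hk])
    have hw : {k : Fin n | (Function.update v.1 i .one k).isExc}.Subsingleton := by
      refine v.2.anti fun k hk => ?_
      by_cases e : k = i
      · subst e; simp [Letter.isExc] at hk
      · simpa [e] using hk
    obtain ⟨z, hz⟩ := ih ⟨Function.update v.1 i .one, hw⟩ (fun k hk => by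
      by_cases e : k = i
      · subst e; simp
      · simpa [e] using hv k (by simp [e, hk]))
    obtain ⟨u, hui, hu⟩ := smat_col i (v.1 i) hvi
    subst hui
    obtain ⟨c, hc, hJ⟩ := JJ_col u v.1 (Function.update v.1 (slot u) .one) (by simp)
      (fun k hk => by simp [hk]) hu
    refine ⟨c⁻¹ • (toA n g (gen u) * z), ?_⟩
    rw [map_smul, ev_mul, hz, rhoA_gen]
    ext x
    simp only [Pi.smul_apply, smul_eq_mul, Matrix.mulVec_single_one, Matrix.col_apply, res,
      Matrix.submatrix_apply, hJ, Pi.single_apply, Subtype.ext_iff]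
    split_ifs
    · exact inv_mul_cancel₀ hc
    · simp

theorem ev_surj [NeZero n] [NeZero g] : Function.Surjective (ev n g) := by
  rw [← LinearMap.range_eq_top, eq_top_iff, ← (Pi.basisFun ℚ (Good n g)).span_eq,
    Submodule.span_le]
  rintro _ ⟨v, rfl⟩
  rw [Pi.basisFun_apply]
  exact ev_range Finset.univ v (by simp)

theorem final [NeZero n] [NeZero g] (hg : 2 ≤ g) : LinearIndependent ℚ (basisFunXY n g) := by
  have hs := span_basisFun (n := n) hg
  have hfin : Module.Finite ℚ (SurfA n g) :=
    ⟨by rw [← hs]; exact Submodule.fg_span (Set.finite_range _)⟩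
  refine linearIndependent_of_top_le_span_of_card_eq_finrank hs.ge (le_antisymm ?_ ?_)
  · have := LinearMap.finrank_le_finrank_of_surjective (f := ev n g) ev_surj
    rwa [Module.finrank_fintype_fun_eq_card] at this
  · rw [← finrank_top ℚ (SurfA n g), ← hs]
    exact finrank_range_le_card _

end Model

end SurfProof

/-- The images in `A_g` (`g ≥ 2`, `n ≥ 2`) of the monomials `v_1 ⋯ v_n` with
each `v_i ∈ {1, x_i(p), y_i(p), ω_i : 1 ≤ p ≤ g}` and at most one `v_i` in
`{x_i(p), y_i(p), ω_i : 2 ≤ p ≤ g}` form an additive (ℚ-vector space) basis of `A_g`. -/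
theorem stmt6 (n g : ℕ) [NeZero n] [NeZero g] (hn : 2 ≤ n) (hg : 2 ≤ g) :
    LinearIndependent ℚ (basisFunXY n g) ∧
      Submodule.span ℚ (Set.range (basisFunXY n g)) = ⊤ := by
  exact ⟨SurfProof.final hg, SurfProof.span_basisFun hg⟩
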